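/- arXiv:2205.03637 — 3 statements merged into one kernel-verified Lean document; each statement's English description precedes it below -/
import Mathlib

section
/- Let k, l, m be integers satisfying k² + l² − m² = 1 (an integral point on the unit hyperboloid AdS₂ embedded in Minkowski space 𝓜^{2,1} with metric diag(1,1,−1)). Then for every integer b, the triple (x₀, x₁, x₂) = (k + b(km − l), l + b(k + lm), m + b(1 + m²)) satisfies x₀² + x₁² − x₂² = 1, satisfies the light-cone line equations (1 + m²)·x₀ = (k + lm) − x₂·(l − mk) and (1 + m²)·x₁ = (l − mk) + x₂·(k + lm), and the map b ↦ (x₀, x₁, x₂) is injective. In particular, the light-cone line through (k, l, m) contains infinitely many integral points of the hyperboloid. -/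
/-!
The light-cone line through `p = (k, l, m)` has the integral direction
`v = (km − l, k + lm, 1 + m²)`. For the Minkowski form `Q`, both `Q v` and the polar product of
`p` and `v` are multiples of `Q p − 1`, so on the hyperboloid `v` is null and orthogonal to `p`, and
translating `p` by multiples of `v` does not change `Q`. The last coordinate `1 + m²` of `v` is
cancellable, so distinct multiples give distinct points.
-/

theorem map_add_smul_of_map_eq_zero_of_polar_eq_zero {R M N : Type*} [CommRing R]
    [AddCommGroup M] [AddCommGroup N] [Module R M] [Module R N] {Q : QuadraticMap R M N} {x v : M}
    (hv : Q v = 0) (hxv : QuadraticMap.polar Q x v = 0) (b : R) : Q (x + b • v) = Q x := by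
  rw [QuadraticMap.map_add (Q : M → N), QuadraticMap.map_smul, QuadraticMap.polar_smul_right,
    hv, hxv, smul_zero, smul_zero, add_zero, add_zero]

section AntiDeSitter

variable {R : Type*} [CommRing R]

variable (R) in
/-- The quadratic form `x₀² + x₁² − x₂²` of three-dimensional Minkowski space, on triples
`(x₀, x₁, x₂)` over an arbitrary commutative ring. -/
def minkowskiForm : QuadraticForm R (R × R × R) :=
  .prod .sq (.prod .sq (-.sq))

theorem minkowskiForm_apply (x : R × R × R) :
    minkowskiForm R x = x.1 ^ 2 + x.2.1 ^ 2 - x.2.2 ^ 2 := by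
  simp only [minkowskiForm, QuadraticMap.prod_apply, neg_apply, QuadraticMap.sq_apply]
  ring

theorem polar_minkowskiForm (x y : R × R × R) :
    QuadraticMap.polar (minkowskiForm R) x y =
      2 * (x.1 * y.1 + x.2.1 * y.2.1 - x.2.2 * y.2.2) := by
  simp only [QuadraticMap.polar, minkowskiForm_apply, Prod.fst_add, Prod.snd_add]
  ring

variable (R) in
/-- The hyperboloid AdS₂: the `R`-points of Minkowski norm `1`. -/
def antiDeSitterTwo : Set (R × R × R) :=
  {x | x.1 ^ 2 + x.2.1 ^ 2 - x.2.2 ^ 2 = 1}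

theorem mem_antiDeSitterTwo_iff {x : R × R × R} :
    x ∈ antiDeSitterTwo R ↔ minkowskiForm R x = 1 := by
  rw [antiDeSitterTwo, Set.mem_ofPred_eq, minkowskiForm_apply]

/-- The light-cone line through `p = (k, l, m)`, with `μ = x₂` eliminated from its parametrization
and denominators cleared, so that it makes sense over any commutative ring. -/
def lightConeLine (p : R × R × R) : Set (R × R × R) :=
  {x | (1 + p.2.2 ^ 2) * x.1 = (p.1 + p.2.1 * p.2.2) - x.2.2 * (p.2.1 - p.2.2 * p.1) ∧
    (1 + p.2.2 ^ 2) * x.2.1 = (p.2.1 - p.2.2 * p.1) + x.2.2 * (p.1 + p.2.1 * p.2.2)}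

/-- The direction vector of `lightConeLine p`, scaled by `1 + m²` relative to the parameter `μ` so
that its coordinates are polynomials in those of `p = (k, l, m)`. -/
def lightConeDirection (p : R × R × R) : R × R × R :=
  (p.1 * p.2.2 - p.2.1, p.1 + p.2.1 * p.2.2, 1 + p.2.2 ^ 2)

theorem minkowskiForm_lightConeDirection (p : R × R × R) :
    minkowskiForm R (lightConeDirection p) = (1 + p.2.2 ^ 2) * (minkowskiForm R p - 1) := by
  simp only [minkowskiForm_apply, lightConeDirection]
  ring

theorem polar_minkowskiForm_lightConeDirection (p : R × R × R) :
    QuadraticMap.polar (minkowskiForm R) p (lightConeDirection p) =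
      2 * p.2.2 * (minkowskiForm R p - 1) := by
  simp only [polar_minkowskiForm, minkowskiForm_apply, lightConeDirection]
  ring

theorem add_smul_lightConeDirection_mem_antiDeSitterTwo {p : R × R × R}
    (hp : p ∈ antiDeSitterTwo R) (b : R) :
    p + b • lightConeDirection p ∈ antiDeSitterTwo R := by
  have norm_p : minkowskiForm R p = 1 := mem_antiDeSitterTwo_iff.1 hp
  have null : minkowskiForm R (lightConeDirection p) = 0 := by
    rw [minkowskiForm_lightConeDirection, norm_p, sub_self, mul_zero]
  have orthogonal : QuadraticMap.polar (minkowskiForm R) p (lightConeDirection p) = 0 := by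
    rw [polar_minkowskiForm_lightConeDirection, norm_p, sub_self, mul_zero]
  rw [mem_antiDeSitterTwo_iff, map_add_smul_of_map_eq_zero_of_polar_eq_zero null orthogonal, norm_p]

theorem add_smul_lightConeDirection_mem_lightConeLine (p : R × R × R) (b : R) :
    p + b • lightConeDirection p ∈ lightConeLine p := by
  simp only [lightConeLine, lightConeDirection, Set.mem_ofPred_eq, Prod.fst_add, Prod.snd_add,
    Prod.smul_fst, Prod.smul_snd, smul_eq_mul]
  constructor <;> ring

theorem add_smul_lightConeDirection_injective {p : R × R × R} (hp : IsRegular (1 + p.2.2 ^ 2)) :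
    Function.Injective fun b : R ↦ p + b • lightConeDirection p :=
  .of_comp (f := fun x : R × R × R ↦ x.2.2) ((add_right_injective p.2.2).comp hp.right)

theorem statement0_general [Infinite R] {p : R × R × R} (hp : p ∈ antiDeSitterTwo R)
    (regular : IsRegular (1 + p.2.2 ^ 2)) :
    (∀ b : R, p + b • lightConeDirection p ∈ antiDeSitterTwo R ∩ lightConeLine p) ∧
      (Function.Injective fun b : R ↦ p + b • lightConeDirection p) ∧
      (antiDeSitterTwo R ∩ lightConeLine p).Infinite := by
  have mem (b : R) : p + b • lightConeDirection p ∈ antiDeSitterTwo R ∩ lightConeLine p :=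
    ⟨add_smul_lightConeDirection_mem_antiDeSitterTwo hp b,
      add_smul_lightConeDirection_mem_lightConeLine p b⟩
  have injective := add_smul_lightConeDirection_injective regular
  exact ⟨mem, injective, Set.infinite_of_injective_forall_mem injective mem⟩

end AntiDeSitter

/-- For an integral point `(k, l, m)` on the hyperboloid
`k² + l² − m² = 1` (AdS₂ in `𝓜^{2,1}` with metric `diag(1,1,−1)`), every integer `b`
yields an integral point `(k + b(km − l), l + b(k + lm), m + b(1 + m²))` on the
hyperboloid which lies on the light-cone line through `(k, l, m)`; the map
`b ↦ (x₀, x₁, x₂)` is injective, hence the light-cone line contains infinitely many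
integral points of the hyperboloid. -/
theorem statement0 (k l m : ℤ) (h : k ^ 2 + l ^ 2 - m ^ 2 = 1) :
    (∀ b : ℤ,
      (k + b * (k * m - l)) ^ 2 + (l + b * (k + l * m)) ^ 2
          - (m + b * (1 + m ^ 2)) ^ 2 = 1 ∧
      (1 + m ^ 2) * (k + b * (k * m - l))
          = (k + l * m) - (m + b * (1 + m ^ 2)) * (l - m * k) ∧
      (1 + m ^ 2) * (l + b * (k + l * m))
          = (l - m * k) + (m + b * (1 + m ^ 2)) * (k + l * m)) ∧
    Function.Injective (fun b : ℤ =>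
      (k + b * (k * m - l), l + b * (k + l * m), m + b * (1 + m ^ 2))) ∧
    Set.Infinite {p : ℤ × ℤ × ℤ |
      p.1 ^ 2 + p.2.1 ^ 2 - p.2.2 ^ 2 = 1 ∧
      (1 + m ^ 2) * p.1 = (k + l * m) - p.2.2 * (l - m * k) ∧
      (1 + m ^ 2) * p.2.1 = (l - m * k) + p.2.2 * (k + l * m)} :=
  statement0_general (p := (k, l, m)) h (IsRegular.of_ne_zero (by positivity))
end

section
/- Let k ≥ 1 be an integer and (gₙ) the k-Fibonacci sequence. Then for every integer l ≥ 1 and every n ≥ 0, g_{n+2l} ≡ (−1)^l · gₙ (mod g_l). In particular, the k-Fibonacci sequence reduced modulo g_l is periodic with period dividing 2l when l is even and dividing 4l when l is odd, generalizing the Falk–Dyson result for the Fibonacci sequence. -/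
/-- The k-Fibonacci sequence: `g₀ = 0`, `g₁ = 1`, `g_{n+2} = k·g_{n+1} + gₙ`. -/
def kfib (k : ℕ) : ℕ → ℕ
  | 0 => 0
  | 1 => 1
  | n + 2 => k * kfib k (n + 1) + kfib k n

/-!
The `k`-Fibonacci sequence is the Lucas sequence `U(k, -1)`. Suppose `U_l(P, Q) = 0` in some
commutative ring. The addition formula then makes a shift by `l` multiply every solution of the
recurrence by `U_{l+1}`, and Cassini's identity reads `U_{l+1}² = Q^l`; so a shift by `2l`
multiplies by `Q^l`. Congruences modulo `g_l` are the instance of this in the ring `ℤ/g_l`, where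
`g_l` vanishes.
-/

section Lucas

variable {R : Type*} [CommRing R]

/-- The recurrence `w_{n+2} = P·w_{n+1} - Q·wₙ` of the Lucas sequences with parameters `P`, `Q`. -/
def lucasRec (P Q : R) : LinearRecurrence R where
  order := 2
  coeffs := ![-Q, P]

/-- The Lucas sequence of the first kind `Uₙ(P, Q)`: the solution of `lucasRec P Q` starting
with `0, 1`. -/
def lucasU (P Q : R) : ℕ → R
  | 0 => 0
  | 1 => 1
  | n + 2 => P * lucasU P Q (n + 1) - Q * lucasU P Q n

variable {P Q : R} {w : ℕ → R} {l : ℕ}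

theorem lucasRec_isSolution_iff :
    (lucasRec P Q).IsSolution w ↔ ∀ n, w (n + 2) = P * w (n + 1) - Q * w n := by
  have sum_coeffs (n : ℕ) : ∑ i : Fin 2, ![-Q, P] i * w (n + i) = P * w (n + 1) - Q * w n := by
    simp [Fin.sum_univ_two, sub_eq_neg_add]
  exact forall_congr' fun n ↦ by rw [← sum_coeffs]; rfl

theorem lucasU_isSolution (P Q : R) : (lucasRec P Q).IsSolution (lucasU P Q) :=
  lucasRec_isSolution_iff.mpr fun _ ↦ rfl

theorem apply_add_of_isSolution_lucasRec (hw : (lucasRec P Q).IsSolution w) (n l : ℕ) :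
    w (n + l) = lucasU P Q (l + 1) * w n + lucasU P Q l * (w (n + 1) - P * w n) := by
  induction l generalizing n with
  | zero => simp [lucasU]
  | succ l ih =>
    rw [← add_assoc, add_right_comm, ih, lucasRec_isSolution_iff.mp hw, lucasU]
    ring

theorem lucasU_cassini (P Q : R) (l : ℕ) :
    lucasU P Q (l + 1) ^ 2 - P * lucasU P Q l * lucasU P Q (l + 1) + Q * lucasU P Q l ^ 2
      = Q ^ l := by
  induction l with
  | zero => simp [lucasU]
  | succ l ih =>
    rw [pow_succ Q, ← ih, lucasU]
    ring

theorem apply_add_two_mul_of_lucasU_eq_zero (hw : (lucasRec P Q).IsSolution w)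
    (hl : lucasU P Q l = 0) (n : ℕ) : w (n + 2 * l) = Q ^ l * w n := by
  have shift (m : ℕ) : w (m + l) = lucasU P Q (l + 1) * w m := by
    simpa [hl] using apply_add_of_isSolution_lucasRec hw m l
  have sq_eq : lucasU P Q (l + 1) ^ 2 = Q ^ l := by simpa [hl] using lucasU_cassini P Q l
  calc w (n + 2 * l) = w (n + l + l) := by rw [two_mul, add_assoc]
    _ = lucasU P Q (l + 1) ^ 2 * w n := by rw [shift, shift, sq, mul_assoc]
    _ = Q ^ l * w n := by rw [sq_eq]

theorem statement18_general (hw : (lucasRec P Q).IsSolution w) (hl : lucasU P Q l = 0) :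
    (∀ n, w (n + 2 * l) = Q ^ l * w n) ∧
    (Q ^ l = 1 → Function.Periodic w (2 * l)) ∧
    (Q ^ l = -1 → Function.Periodic w (4 * l)) := by
  have shift := apply_add_two_mul_of_lucasU_eq_zero hw hl
  refine ⟨shift, fun hQ n ↦ by simp [shift, hQ], fun hQ ↦ ?_⟩
  have antiperiodic : Function.Antiperiodic w (2 * l) := fun n ↦ by simp [shift, hQ]
  simpa [← mul_assoc] using antiperiodic.periodic_two_mul

theorem natCast_kfib (k : ℕ) : ∀ n : ℕ, (kfib k n : R) = lucasU (k : R) (-1) n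
  | 0 => by simp [kfib, lucasU]
  | 1 => by simp [kfib, lucasU]
  | n + 2 => by simp [kfib, lucasU, natCast_kfib k (n + 1), natCast_kfib k n]

theorem lucasU_zmod_kfib_eq_zero (k l : ℕ) : lucasU (k : ZMod (kfib k l)) (-1) l = 0 := by
  rw [← natCast_kfib, ZMod.natCast_self]

end Lucas

/-- For every `l ≥ 1` and `n ≥ 0`,
`g_{n+2l} ≡ (−1)^l · gₙ (mod g_l)`; in particular the k-Fibonacci sequence mod `g_l`
is periodic with period dividing `2l` for even `l` and dividing `4l` for odd `l`. -/
theorem statement18 (k : ℕ) (hk : 1 ≤ k) (l : ℕ) (hl : 1 ≤ l) :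
    (∀ n : ℕ, (kfib k (n + 2 * l) : ℤ)
        ≡ (-1 : ℤ) ^ l * (kfib k n : ℤ) [ZMOD (kfib k l : ℤ)]) ∧
    (Even l → ∀ n : ℕ, kfib k (n + 2 * l) ≡ kfib k n [MOD kfib k l]) ∧
    (Odd l → ∀ n : ℕ, kfib k (n + 4 * l) ≡ kfib k n [MOD kfib k l]) := by
  obtain ⟨shift, periodic_of_one, periodic_of_neg_one⟩ :=
    statement18_general (lucasU_isSolution _ _) (lucasU_zmod_kfib_eq_zero k l)
  simp only [← ZMod.intCast_eq_intCast_iff, ← ZMod.natCast_eq_natCast_iff]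
  push_cast
  simp only [natCast_kfib]
  exact ⟨shift, (periodic_of_one ·.neg_one_pow), (periodic_of_neg_one ·.neg_one_pow)⟩
end

section
/- For every integer l ≥ 1 and every n ≥ 0, fib(n + 2l) ≡ (−1)^l · fib(n) (mod fib(l)). In particular, the Fibonacci sequence reduced modulo fib(l) is periodic with period dividing 2l when l is even and dividing 4l when l is odd (the Falk–Dyson result). -/
/-!
Write `F` for the Fibonacci sequence and `L m = F (m - 1) + F (m + 1)` for the Lucas sequence, both
indexed by `ℤ`. The congruence modulo `F l` is the shadow of the exact identity
`F (n + 2 * l) = (-1) ^ l * F n + F l * L (n + l)`, which the addition formula reduces to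
d'Ocagne's identity `F (n + l) * F (l + 1) - F (n + l + 1) * F l = (-1) ^ l * F n`, and thence to
Cassini's. For odd `l` a shift by `2 * l` changes the sign modulo `F l`, so a shift by `4 * l`
restores it.
-/

theorem fib_add_mul_fib_add_one_sub (n l : ℤ) :
    Int.fib (n + l) * Int.fib (l + 1) - Int.fib (n + l + 1) * Int.fib l =
      (-1) ^ l.natAbs * Int.fib n := by
  have cassini : Int.fib (l + 1) ^ 2 - Int.fib l * Int.fib (l + 2) = (-1) ^ l.natAbs := by
    simpa using Int.fib_add_sq_sub_fib_mul_fib_add_two_mul l 1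
  have fib_add_succ : Int.fib (n + l + 1) =
      Int.fib (n - 1) * Int.fib (l + 1) + Int.fib n * Int.fib (l + 2) := by
    rw [add_assoc, Int.fib_add, add_assoc, one_add_one_eq_two]
  rw [fib_add_succ, Int.fib_add n l, ← cassini]
  ring

theorem fib_add_two_mul_eq (n l : ℤ) :
    Int.fib (n + 2 * l) =
      (-1) ^ l.natAbs * Int.fib n +
        Int.fib l * (Int.fib (n + l - 1) + Int.fib (n + l + 1)) := by
  rw [two_mul, ← add_assoc, Int.fib_add (n + l) l, ← fib_add_mul_fib_add_one_sub]
  ring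

theorem fib_add_two_mul_modEq (n l : ℤ) :
    Int.fib (n + 2 * l) ≡ (-1) ^ l.natAbs * Int.fib n [ZMOD Int.fib l] := by
  rw [fib_add_two_mul_eq]
  exact Int.modEq_add_fac_self

theorem fib_add_two_mul_modEq_of_even {l : ℤ} (hl : Even l) (n : ℤ) :
    Int.fib (n + 2 * l) ≡ Int.fib n [ZMOD Int.fib l] := by
  simpa only [(Int.natAbs_even.2 hl).neg_one_pow, one_mul] using fib_add_two_mul_modEq n l

theorem fib_add_two_mul_modEq_neg_of_odd {l : ℤ} (hl : Odd l) (n : ℤ) :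
    Int.fib (n + 2 * l) ≡ -Int.fib n [ZMOD Int.fib l] := by
  simpa only [(Int.natAbs_odd.2 hl).neg_one_pow, neg_one_mul] using fib_add_two_mul_modEq n l

theorem fib_add_four_mul_modEq_of_odd {l : ℤ} (hl : Odd l) (n : ℤ) :
    Int.fib (n + 4 * l) ≡ Int.fib n [ZMOD Int.fib l] :=
  calc
    Int.fib (n + 4 * l) = Int.fib (n + 2 * l + 2 * l) := by ring_nf
    _ ≡ -Int.fib (n + 2 * l) [ZMOD Int.fib l] := fib_add_two_mul_modEq_neg_of_odd hl _
    _ ≡ - -Int.fib n [ZMOD Int.fib l] := (fib_add_two_mul_modEq_neg_of_odd hl n).neg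
    _ = Int.fib n := neg_neg _

theorem statement19_general (l : ℤ) :
    (∀ n : ℤ, Int.fib (n + 2 * l) ≡ (-1) ^ l.natAbs * Int.fib n [ZMOD Int.fib l]) ∧
    (Even l → ∀ n : ℤ, Int.fib (n + 2 * l) ≡ Int.fib n [ZMOD Int.fib l]) ∧
    (Odd l → ∀ n : ℤ, Int.fib (n + 4 * l) ≡ Int.fib n [ZMOD Int.fib l]) :=
  ⟨fun n => fib_add_two_mul_modEq n l, fib_add_two_mul_modEq_of_even,
    fib_add_four_mul_modEq_of_odd⟩

/-- For every `l ≥ 1` and `n ≥ 0`,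
`fib(n + 2l) ≡ (−1)^l · fib(n) (mod fib(l))`; in particular the Fibonacci sequence mod
`fib(l)` is periodic with period dividing `2l` for even `l` and dividing `4l` for odd
`l` (the Falk–Dyson result). -/
theorem statement19 (l : ℕ) (hl : 1 ≤ l) :
    (∀ n : ℕ, (Nat.fib (n + 2 * l) : ℤ)
        ≡ (-1 : ℤ) ^ l * (Nat.fib n : ℤ) [ZMOD (Nat.fib l : ℤ)]) ∧
    (Even l → ∀ n : ℕ, Nat.fib (n + 2 * l) ≡ Nat.fib n [MOD Nat.fib l]) ∧
    (Odd l → ∀ n : ℕ, Nat.fib (n + 4 * l) ≡ Nat.fib n [MOD Nat.fib l]) := by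
  obtain ⟨shift, even, odd⟩ := statement19_general l
  simp only [← Int.natCast_modEq_iff, ← Int.fib_natCast, Nat.cast_add, Nat.cast_mul, Nat.cast_ofNat]
  exact ⟨fun n => shift n, fun h n => even (mod_cast h) n, fun h n => odd (mod_cast h) n⟩
end
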